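/- A QRB-domain X is an ωQRB-domain if and only if its Scott topology is countably-based. -/

import Mathlib

/-!
Both directions rest on two facts about a quasi-deflation `φ` and a generating family `(φ i)`.

* Since `φ` is continuous with finite image, it attains its value at a directed supremum already at
  some member of the directed set. Hence `{x | φ x ⊆ A}` is Scott-open for *every* set `A`
  (`IsQuasiDeflation.scottOpen_subset`); it is contained in `A` because `x ∈ φ x`.
* Rudin's lemma (`rudin`): a filtered family of finitary compacts whose intersection lies in a
  Scott-open set `U` has a member inside `U`. So `x ∈ U` implies `φ i x ⊆ U` for some `i`.

If the family is countable, the sets `{y | φ i y ⊆ φ i x}` therefore form a countable base, because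
for each `i` only finitely many of them are distinct. Conversely, given a countable base `B`, choose
for every pair `U, V ∈ B` an index `i` with `φ i y ⊆ V` for all `y ∈ U`, whenever there is one. By
the two facts these countably many `φ i` already satisfy `⋂ i, φ i x = ↑x`, since `↑x` is the
intersection of the basic neighbourhoods of `x`. Replacing an enumeration of them by successive upper
bounds in the directed family gives a decreasing generating sequence.
-/

open Set TopologicalSpace

universe u v

section ScottTopology

variable {α : Type u}

/-- A Scott-open subset of a preorder: an upward-closed set that is inaccessible by
directed suprema. -/
def ScottOpen [Preorder α] (U : Set α) : Prop :=
  IsUpperSet U ∧ ∀ d : Set α, d.Nonempty → DirectedOn (· ≤ ·) d →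
    ∀ a : α, IsLUB d a → a ∈ U → (d ∩ U).Nonempty

/-- The Scott topology on a preorder. -/
def scottTop (α : Type u) [Preorder α] : TopologicalSpace α where
  IsOpen := ScottOpen
  isOpen_univ := by
    refine ⟨isUpperSet_univ, ?_⟩
    intro d hd _ a _ _
    obtain ⟨x, hx⟩ := hd
    exact ⟨x, hx, trivial⟩
  isOpen_inter := by
    rintro U V ⟨hU, hU'⟩ ⟨hV, hV'⟩
    refine ⟨hU.inter hV, ?_⟩
    intro d hd hdir a ha hmem
    obtain ⟨x, hxd, hxU⟩ := hU' d hd hdir a ha hmem.1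
    obtain ⟨y, hyd, hyV⟩ := hV' d hd hdir a ha hmem.2
    obtain ⟨z, hzd, hxz, hyz⟩ := hdir x hxd y hyd
    exact ⟨z, hzd, hU hxz hxU, hV hyz hyV⟩
  isOpen_sUnion := by
    intro S hS
    constructor
    · intro a b hab ha
      obtain ⟨U, hUS, haU⟩ := ha
      exact ⟨U, hUS, (hS U hUS).1 hab haU⟩
    · intro d hd hdir a ha hmem
      obtain ⟨U, hUS, haU⟩ := hmem
      obtain ⟨x, hxd, hxU⟩ := (hS U hUS).2 d hd hdir a ha haU
      exact ⟨x, hxd, U, hUS, hxU⟩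

/-- A dcpo: every nonempty directed subset has a least upper bound. -/
def IsDcpo (α : Type u) [Preorder α] : Prop :=
  ∀ d : Set α, d.Nonempty → DirectedOn (· ≤ ·) d → ∃ a : α, IsLUB d a

/-- The upward closure `↑E = {x | ∃ e ∈ E, e ≤ x}` of a set. -/
def upClos [Preorder α] (E : Set α) : Set α := {x | ∃ e ∈ E, e ≤ x}

/-- A finitary compact: a set of the form `↑E` with `E` finite and nonempty. -/
def IsFinitaryCompact [Preorder α] (A : Set α) : Prop :=
  ∃ E : Set α, E.Finite ∧ E.Nonempty ∧ A = upClos E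

/-- `Fin(α)`: the nonempty finitary compacts of `α`, ordered by reverse inclusion. -/
def FinCompacts (α : Type u) [Preorder α] : Type u := {A : Set α // IsFinitaryCompact A}

instance FinCompacts.instPartialOrder [Preorder α] : PartialOrder (FinCompacts α) where
  le A B := B.1 ⊆ A.1
  le_refl A := subset_rfl
  le_trans A B C h1 h2 := subset_trans h2 h1
  le_antisymm A B h1 h2 := Subtype.ext (subset_antisymm h2 h1)

/-- `U ⋘ x`: every directed family whose least upper bound is above `x` has some
member in `U`. -/
def approxes [Preorder α] (U : Set α) (x : α) : Prop :=
  ∀ d : Set α, d.Nonempty → DirectedOn (· ≤ ·) d →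
    ∀ a : α, IsLUB d a → x ≤ a → ∃ z ∈ d, z ∈ U

/-- A quasi-deflation: a map `φ : α → Fin_σ(α)`, continuous for the Scott topologies,
such that `x ∈ φ x` for every `x`, and with finite image. -/
def IsQuasiDeflation [Preorder α] (φ : α → FinCompacts α) : Prop :=
  @Continuous α (FinCompacts α) (scottTop α) (scottTop (FinCompacts α)) φ ∧
  (∀ x : α, x ∈ (φ x).1) ∧ (Set.range φ).Finite

/-- A generating family of quasi-deflations: a (nonempty) family of quasi-deflations,
directed in the pointwise reverse-inclusion order, with `⋂ i, φ i x = ↑x` for all `x`. -/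
def IsGeneratingFamily [Preorder α] {I : Type v} (φ : I → α → FinCompacts α) : Prop :=
  Nonempty I ∧
  (∀ i j : I, ∃ k : I, (∀ x, (φ k x).1 ⊆ (φ i x).1) ∧ (∀ x, (φ k x).1 ⊆ (φ j x).1)) ∧
  (∀ i, IsQuasiDeflation (φ i)) ∧
  (∀ x : α, (⋂ i, (φ i x).1) = Set.Ici x)

/-- A QRB-domain: a pointed dcpo with a generating family of quasi-deflations. -/
def IsQRBDomain (α : Type u) [PartialOrder α] : Prop :=
  IsDcpo α ∧ (∃ b : α, ∀ x, b ≤ x) ∧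
  ∃ (I : Type u) (φ : I → α → FinCompacts α), IsGeneratingFamily φ

/-- An ωQRB-domain: a pointed dcpo with a countable generating family of
quasi-deflations. -/
def IsOmegaQRBDomain (α : Type u) [PartialOrder α] : Prop :=
  IsDcpo α ∧ (∃ b : α, ∀ x, b ≤ x) ∧
  ∃ (I : Type u), Countable I ∧
    ∃ φ : I → α → FinCompacts α, IsGeneratingFamily φ

/-- A deflation on a pointed dcpo: a Scott-continuous map below the identity, with
finite image. -/
def IsDeflation [Preorder α] (f : α → α) : Prop :=
  @Continuous α α (scottTop α) (scottTop α) f ∧ (∀ x, f x ≤ x) ∧ (Set.range f).Finite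

/-- An RB-domain: a pointed dcpo with a directed family of deflations whose pointwise
least upper bound is the identity. -/
def IsRBDomain (α : Type u) [PartialOrder α] : Prop :=
  IsDcpo α ∧ (∃ b : α, ∀ x, b ≤ x) ∧
  ∃ (I : Type u) (f : I → α → α), Nonempty I ∧
    (∀ i j : I, ∃ k : I, (∀ x, f i x ≤ f k x) ∧ (∀ x, f j x ≤ f k x)) ∧
    (∀ i, IsDeflation (f i)) ∧
    ∀ x : α, IsLUB (Set.range fun i => f i x) x

/-- An ωB-domain (SFP-domain): a pointed dcpo with a non-decreasing sequence of
idempotent deflations whose pointwise least upper bound is the identity. -/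
def IsOmegaBDomain (α : Type u) [PartialOrder α] : Prop :=
  IsDcpo α ∧ (∃ b : α, ∀ x, b ≤ x) ∧
  ∃ f : ℕ → α → α,
    (∀ i, IsDeflation (f i)) ∧
    (∀ i, ∀ x, f i (f i x) = f i x) ∧
    (∀ i j : ℕ, i ≤ j → ∀ x, f i x ≤ f j x) ∧
    ∀ x : α, IsLUB (Set.range fun i => f i x) x

/-- A map finitely separated from the identity. -/
def IsFinitelySeparated [Preorder α] (f : α → α) : Prop :=
  ∃ M : Set α, M.Finite ∧ ∀ x : α, ∃ m ∈ M, f x ≤ m ∧ m ≤ x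

/-- An FS-domain: a pointed dcpo with a directed family of continuous maps, each
finitely separated from the identity, whose pointwise least upper bound is the
identity. -/
def IsFSDomain (α : Type u) [PartialOrder α] : Prop :=
  IsDcpo α ∧ (∃ b : α, ∀ x, b ≤ x) ∧
  ∃ (I : Type u) (f : I → α → α), Nonempty I ∧
    (∀ i j : I, ∃ k : I, (∀ x, f i x ≤ f k x) ∧ (∀ x, f j x ≤ f k x)) ∧
    (∀ i, @Continuous α α (scottTop α) (scottTop α) (f i) ∧ IsFinitelySeparated (f i)) ∧
    ∀ x : α, IsLUB (Set.range fun i => f i x) x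

/-- A controlled QRB-domain: a pointed dcpo with a directed family of controlled
quasi-deflations `(f i, φ i)` (i.e. `φ i x ⊆ ↑(f i x)`) with `x = sup_i f i x`. -/
def IsControlledQRBDomain (α : Type u) [PartialOrder α] : Prop :=
  IsDcpo α ∧ (∃ b : α, ∀ x, b ≤ x) ∧
  ∃ (I : Type u) (f : I → α → α) (φ : I → α → FinCompacts α), Nonempty I ∧
    (∀ i j : I, ∃ k : I,
      ((∀ x, f i x ≤ f k x) ∧ ∀ x, (φ k x).1 ⊆ (φ i x).1) ∧
      ((∀ x, f j x ≤ f k x) ∧ ∀ x, (φ k x).1 ⊆ (φ j x).1)) ∧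
    (∀ i, @Continuous α α (scottTop α) (scottTop α) (f i) ∧ IsQuasiDeflation (φ i) ∧
      ∀ x, (φ i x).1 ⊆ Set.Ici (f i x)) ∧
    ∀ x : α, IsLUB (Set.range fun i => f i x) x

/-- A continuous dcpo: for every `x`, the set of elements way-below `x` is
(nonempty and) directed and has `x` as least upper bound. -/
def IsContinuousDcpo (α : Type u) [Preorder α] : Prop :=
  IsDcpo α ∧ ∀ x : α,
    {y : α | approxes (Set.Ici y) x}.Nonempty ∧
    DirectedOn (· ≤ ·) {y : α | approxes (Set.Ici y) x} ∧
    IsLUB {y : α | approxes (Set.Ici y) x} x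

/-- The finitary compacts `↑E` (E finite nonempty) that approximate `x`. -/
def finUpsBelow [Preorder α] (x : α) : Set (Set α) :=
  {A | (∃ E : Set α, E.Finite ∧ E.Nonempty ∧ A = upClos E) ∧ approxes A x}

/-- A quasi-continuous dcpo. -/
def IsQuasiContinuous (α : Type u) [Preorder α] : Prop :=
  IsDcpo α ∧ ∀ x : α,
    (finUpsBelow x).Nonempty ∧
    DirectedOn (fun A B : Set α => B ⊆ A) (finUpsBelow x) ∧
    ⋂₀ finUpsBelow x = Set.Ici x

/-- The upper Vietoris topology on `Fin(α)` (the subspace topology induced from the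
Smyth powerspace of `α` with its Scott topology), generated by the sets
`◻U = {↑E | ↑E ⊆ U}` for `U` Scott-open. -/
def finUpperVietoris (α : Type u) [Preorder α] : TopologicalSpace (FinCompacts α) :=
  TopologicalSpace.generateFrom
    {S | ∃ U : Set α, ScottOpen U ∧ S = {A : FinCompacts α | A.1 ⊆ U}}

end ScottTopology

section Spaces

variable {X : Type u} {Y : Type v}

/-- The specialization preorder of a topological space: `x ≤ y` iff every open set
containing `x` contains `y`. -/
def specLE [TopologicalSpace X] (x y : X) : Prop :=
  ∀ U : Set X, IsOpen U → x ∈ U → y ∈ U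

/-- `↑x` in the specialization preorder. -/
def specUp [TopologicalSpace X] (x : X) : Set X := {y | specLE x y}

/-- Upward closure of a set in the specialization preorder. -/
def specUpSet [TopologicalSpace X] (A : Set X) : Set X := {y | ∃ a ∈ A, specLE a y}

/-- Downward closure of a set in the specialization preorder. -/
def specDownSet [TopologicalSpace X] (A : Set X) : Set X := {x | ∃ a ∈ A, specLE x a}

/-- A saturated set: one that is upward closed in the specialization preorder. -/
def IsSaturatedSet [TopologicalSpace X] (A : Set X) : Prop :=
  ∀ x ∈ A, ∀ y : X, specLE x y → y ∈ A

/-- A coherent space: the intersection of any two compact saturated subsets is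
compact. -/
def IsCoherent (X : Type u) [TopologicalSpace X] : Prop :=
  ∀ Q₁ Q₂ : Set X, IsCompact Q₁ → IsSaturatedSet Q₁ → IsCompact Q₂ → IsSaturatedSet Q₂ →
    IsCompact (Q₁ ∩ Q₂)

/-- A stably compact space: T0, compact, locally compact, sober and coherent. -/
def IsStablyCompact (X : Type u) [TopologicalSpace X] : Prop :=
  T0Space X ∧ CompactSpace X ∧ LocallyCompactSpace X ∧ QuasiSober X ∧ IsCoherent X

/-- A proper map: continuous, the downward closure of the image of any closed set is
closed, and the preimage of `↑y` is compact for every `y`. -/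
def PaperProper [TopologicalSpace X] [TopologicalSpace Y] (r : X → Y) : Prop :=
  Continuous r ∧
  (∀ F : Set X, IsClosed F → IsClosed (specDownSet (r '' F))) ∧
  ∀ y : Y, IsCompact (r ⁻¹' specUp y)

/-- The Smyth powerspace: nonempty compact saturated subsets. -/
def SmythP (X : Type u) [TopologicalSpace X] : Type u :=
  {Q : Set X // Q.Nonempty ∧ IsCompact Q ∧ IsSaturatedSet Q}

/-- The upper Vietoris topology on the Smyth powerspace, generated by the sets
`◻U = {Q | Q ⊆ U}`, `U` open. -/
instance SmythP.instTopologicalSpace [TopologicalSpace X] : TopologicalSpace (SmythP X) :=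
  TopologicalSpace.generateFrom
    {S | ∃ U : Set X, IsOpen U ∧ S = {Q : SmythP X | Q.1 ⊆ U}}

/-- The order on the Smyth powerspace: reverse inclusion. -/
instance SmythP.instPartialOrder [TopologicalSpace X] : PartialOrder (SmythP X) where
  le Q Q' := Q'.1 ⊆ Q.1
  le_refl Q := subset_rfl
  le_trans Q Q' Q'' h1 h2 := subset_trans h2 h1
  le_antisymm Q Q' h1 h2 := Subtype.ext (subset_antisymm h2 h1)

/-- A quasi-retraction `r : X → Y`: a continuous map admitting a continuous
quasi-section `ς : Y → S_V(X)` with `↑{r x | x ∈ ς y} = ↑y` for every `y`. -/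
def IsQuasiRetraction [TopologicalSpace X] [TopologicalSpace Y] (r : X → Y) : Prop :=
  Continuous r ∧
  ∃ ς : Y → SmythP X, Continuous ς ∧ ∀ y : Y, specUpSet (r '' (ς y).1) = specUp y

/-- The specialization ordering of a T0 space, as a partial order. -/
def specOrder (X : Type u) [TopologicalSpace X] [T0Space X] : PartialOrder X where
  le := specLE
  le_refl x := fun _ _ h => h
  le_trans x y z h1 h2 := fun U hU hx => h2 U hU (h1 U hU hx)
  le_antisymm x y h1 h2 :=
    (inseparable_iff_forall_isOpen.mpr fun U hU => ⟨h1 U hU, h2 U hU⟩).eq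

/-- A continuous probability valuation on a topological space: a map from opens to
nonnegative reals that is strict, monotone, modular, continuous (preserves directed
suprema of opens) and normalized. -/
structure IsProbValuation [TopologicalSpace X] (ν : Opens X → NNReal) : Prop where
  empty : ν ⊥ = 0
  mono : ∀ U V : Opens X, U ≤ V → ν U ≤ ν V
  modular : ∀ U V : Opens X, ν (U ⊔ V) + ν (U ⊓ V) = ν U + ν V
  scont : ∀ S : Set (Opens X), S.Nonempty → DirectedOn (· ≤ ·) S →
    ν (sSup S) = ⨆ U ∈ S, ν U
  total : ν ⊤ = 1

/-- `V_1(X)`: the probability valuations on `X`, ordered pointwise. -/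
abbrev ProbVal (X : Type u) [TopologicalSpace X] : Type u :=
  {ν : Opens X → NNReal // IsProbValuation ν}

/-- The weak topology on `V_1(X)`, generated by the sets `[U > a]`. -/
def weakTop (X : Type u) [TopologicalSpace X] : TopologicalSpace (ProbVal X) :=
  TopologicalSpace.generateFrom
    {S | ∃ (U : Opens X) (a : ℝ), S = {ν : ProbVal X | a < (ν.1 U : ℝ)}}

/-- `ν†(Q) = inf {ν U | U open, Q ⊆ U}`. -/
noncomputable def dagVal [TopologicalSpace X] (ν : Opens X → NNReal) (Q : Set X) :
    NNReal :=
  ⨅ U : {U : Opens X // Q ⊆ U.1}, ν U.1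

end Spaces

section Paths

variable {Y : Type u}

/-- A path in a pointed poset: a finite covering chain starting at the least
element. -/
def IsPathIn [PartialOrder Y] (bot : Y) (S : Set Y) : Prop :=
  ∃ (n : ℕ) (c : Fin (n + 1) → Y), c 0 = bot ∧
    (∀ i : Fin n, c i.castSucc ⋖ c i.succ) ∧ S = Set.range c

/-- The path space `Π(Y)` of a pointed poset, ordered by inclusion. -/
abbrev PathSpace (Y : Type u) [PartialOrder Y] (bot : Y) : Type u :=
  {S : Set Y // IsPathIn bot S}

end Paths

/-! ### Quasi-deflations and Scott-open sets -/

theorem scottOpen_not_le {α : Type u} [Preorder α] (a : α) : ScottOpen {b : α | ¬ b ≤ a} := by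
  refine ⟨fun b c hbc hb hc => hb (hbc.trans hc), fun d _ _ b hlub hb => ?_⟩
  by_contra hne
  refine hb (hlub.2 fun z hz => ?_)
  by_contra hza
  exact hne ⟨z, hz, hza⟩

theorem IsQuasiDeflation.preimage_scottOpen {α : Type u} [Preorder α] {φ : α → FinCompacts α}
    (hφ : IsQuasiDeflation φ) {V : Set (FinCompacts α)} (hV : ScottOpen V) :
    ScottOpen (φ ⁻¹' V) :=
  (@continuous_def _ _ (scottTop α) (scottTop (FinCompacts α)) φ).1 hφ.1 V hV

theorem IsQuasiDeflation.monotone {α : Type u} [Preorder α] {φ : α → FinCompacts α}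
    (hφ : IsQuasiDeflation φ) : Monotone φ := by
  intro x y hxy
  by_contra h
  exact (hφ.preimage_scottOpen (scottOpen_not_le (φ y))).1 hxy h le_rfl

/-- On a directed set, `φ` takes finitely many values, so one of them is the largest; by continuity
it is the value at the supremum. -/
theorem IsQuasiDeflation.scottOpen_subset {α : Type u} [Preorder α] {φ : α → FinCompacts α}
    (hφ : IsQuasiDeflation φ) (A : Set α) : ScottOpen {x | (φ x).1 ⊆ A} := by
  refine ⟨fun x y hxy hx => Set.Subset.trans (hφ.monotone hxy) hx, fun d hd hdir a hlub ha => ?_⟩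
  obtain ⟨_, ⟨⟨z₀, hz₀, rfl⟩, hmax⟩⟩ :=
    (hφ.2.2.subset (Set.image_subset_range φ d)).exists_maximal (hd.image φ)
  refine ⟨z₀, hz₀, Set.Subset.trans ?_ ha⟩
  by_contra hne
  obtain ⟨z, hz, hzz⟩ :=
    (hφ.preimage_scottOpen (scottOpen_not_le (φ z₀))).2 d hd hdir a hlub hne
  obtain ⟨w, hw, hzw, hz₀w⟩ := hdir z hz z₀ hz₀
  exact hzz ((hφ.monotone hzw).trans (hmax ⟨w, hw, rfl⟩ (hφ.monotone hz₀w)))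

/-! ### Rudin's lemma -/

/-- Rudin's lemma. A lower set that is minimal among the lower subsets of `Uᶜ` meeting every member
of the family is directed, and its supremum lies in every member. -/
theorem rudin {α : Type u} [Preorder α] (hα : IsDcpo α) {I : Type v} [Nonempty I]
    (Q : I → FinCompacts α) (hQ : ∀ i j, ∃ k, (Q k).1 ⊆ (Q i).1 ∧ (Q k).1 ⊆ (Q j).1)
    {U : Set α} (hU : ScottOpen U) (hsub : (⋂ i, (Q i).1) ⊆ U) : ∃ i, (Q i).1 ⊆ U := by
  by_contra! hne
  have hup : ∀ i, ∀ x ∈ (Q i).1, ∀ y, x ≤ y → y ∈ (Q i).1 := by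
    intro i x hx y hxy
    obtain ⟨E, -, -, hE⟩ := (Q i).2
    rw [hE] at hx ⊢
    obtain ⟨e, he, hex⟩ := hx
    exact ⟨e, he, hex.trans hxy⟩
  obtain ⟨L, hLU, hL⟩ := zorn_superset_nonempty
    {L : Set α | IsLowerSet L ∧ ∀ i, (L ∩ (Q i).1).Nonempty} (by
      intro c hc hchain hcne
      refine ⟨⋂₀ c, ⟨isLowerSet_sInter fun s hs => (hc hs).1, fun i => ?_⟩,
        fun s hs => Set.sInter_subset_of_mem hs⟩
      obtain ⟨E, hEfin, -, hE⟩ := (Q i).2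
      by_contra hemp
      -- Each generator of `Q i` is missing from some member of the chain, hence all of the
      -- finitely many generators are missing from a common one.
      have hmiss : ∀ e ∈ E, ∃ s ∈ c, e ∉ s := by
        intro e he
        by_contra! hall
        exact hemp ⟨e, hall, hE ▸ ⟨e, he, le_rfl⟩⟩
      have hcommon : ∃ s ∈ c, ∀ e ∈ E, e ∉ s := by
        clear hE hemp
        induction E, hEfin using Set.Finite.induction_on with
        | empty => exact ⟨hcne.some, hcne.some_mem, by simp⟩
        | @insert a F _ _ ih =>
          obtain ⟨s, hs, hsF⟩ := ih fun e he => hmiss e (Set.mem_insert_of_mem _ he)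
          obtain ⟨t, ht, hat⟩ := hmiss a (Set.mem_insert _ _)
          rcases hchain.total hs ht with hst | hts
          · refine ⟨s, hs, ?_⟩
            rintro e (rfl | he)
            · exact fun h => hat (hst h)
            · exact hsF e he
          · refine ⟨t, ht, ?_⟩
            rintro e (rfl | he)
            · exact hat
            · exact fun h => hsF e he (hts h)
      obtain ⟨s, hs, hsE⟩ := hcommon
      obtain ⟨x, hxs, hxQ⟩ := (hc hs).2 i
      rw [hE] at hxQ
      obtain ⟨e, he, hex⟩ := hxQ
      exact hsE e he ((hc hs).1 hex hxs))
    Uᶜ ⟨hU.1.compl, fun i => by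
      obtain ⟨x, hx, hxU⟩ := Set.not_subset.1 (hne i)
      exact ⟨x, hxU, hx⟩⟩
  have hLne : L.Nonempty := (hL.prop.2 (Classical.arbitrary I)).mono Set.inter_subset_left
  -- By minimality, removing `↑x` from `L` makes it miss some `Q i`.
  have habove : ∀ x ∈ L, ∃ i, L ∩ (Q i).1 ⊆ Set.Ici x := by
    intro x hx
    by_contra! hcon
    have hmem : L ∩ (Set.Ici x)ᶜ ∈
        {L : Set α | IsLowerSet L ∧ ∀ i, (L ∩ (Q i).1).Nonempty} := by
      refine ⟨hL.prop.1.inter (isUpperSet_Ici x).compl, fun i => ?_⟩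
      obtain ⟨y, hy, hyx⟩ := Set.not_subset.1 (hcon i)
      exact ⟨y, ⟨hy.1, hyx⟩, hy.2⟩
    exact (hL.le_of_le hmem Set.inter_subset_left hx).2 (le_refl x)
  have hdir : DirectedOn (· ≤ ·) L := by
    intro x hx y hy
    obtain ⟨i, hi⟩ := habove x hx
    obtain ⟨j, hj⟩ := habove y hy
    obtain ⟨k, hki, hkj⟩ := hQ i j
    obtain ⟨z, hzL, hzk⟩ := hL.prop.2 k
    exact ⟨z, hzL, hi ⟨hzL, hki hzk⟩, hj ⟨hzL, hkj hzk⟩⟩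
  obtain ⟨a, ha⟩ := hα L hLne hdir
  have haU : a ∈ U := hsub (Set.mem_iInter.2 fun i => by
    obtain ⟨z, hzL, hz⟩ := hL.prop.2 i
    exact hup i z hz a (ha.1 hzL))
  obtain ⟨x, hxL, hxU⟩ := hU.2 L hLne hdir a ha haU
  exact hLU hxL hxU

theorem IsGeneratingFamily.exists_subset {α : Type u} [Preorder α] (hα : IsDcpo α) {I : Type v}
    {φ : I → α → FinCompacts α} (hφ : IsGeneratingFamily φ) {U : Set α} (hU : ScottOpen U)
    {x : α} (hx : x ∈ U) : ∃ i, (φ i x).1 ⊆ U := by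
  obtain ⟨hI, hdir, -, hinter⟩ := hφ
  refine rudin hα (fun i => φ i x) (fun i j => ?_) hU ?_
  · obtain ⟨k, hi, hj⟩ := hdir i j
    exact ⟨k, hi x, hj x⟩
  · rw [hinter x]
    exact fun y hy => hU.1 hy hx

/-! ### From a countable generating family to a countable base -/

theorem IsGeneratingFamily.exists_countable_basis {α : Type u} [Preorder α] (hα : IsDcpo α)
    {I : Type v} [Countable I] {φ : I → α → FinCompacts α} (hφ : IsGeneratingFamily φ) :
    ∃ B : Set (Set α), B.Countable ∧ @TopologicalSpace.IsTopologicalBasis α (scottTop α) B := by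
  refine ⟨⋃ i, (fun A : FinCompacts α => {y | (φ i y).1 ⊆ A.1}) '' Set.range (φ i),
    Set.countable_iUnion fun i => ((hφ.2.2.1 i).2.2.image _).countable, ?_⟩
  refine @TopologicalSpace.isTopologicalBasis_of_isOpen_of_nhds α (scottTop α) _ ?_ ?_
  · intro V hV
    obtain ⟨i, A, -, rfl⟩ := Set.mem_iUnion.1 hV
    exact (hφ.2.2.1 i).scottOpen_subset A.1
  · intro x U hx hU
    obtain ⟨i, hi⟩ := hφ.exists_subset hα hU hx
    refine ⟨{y | (φ i y).1 ⊆ (φ i x).1},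
      Set.mem_iUnion.2 ⟨i, φ i x, ⟨x, rfl⟩, rfl⟩, Set.Subset.refl _, fun y hy => ?_⟩
    exact hi (hy ((hφ.2.2.1 i).2.1 y))

/-! ### From a countable base to a countable generating family -/

/-- A countable subfamily with the right intersections is dominated by a decreasing sequence from
the directed family. -/
theorem IsGeneratingFamily.exists_sequence {α : Type u} [Preorder α]
    {I : Type v} {φ : I → α → FinCompacts α} (hφ : IsGeneratingFamily φ) {J : Set I}
    (hJ : J.Countable) (hJinter : ∀ x y, (∀ j ∈ J, y ∈ (φ j x).1) → x ≤ y) :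
    ∃ k : ℕ → I, IsGeneratingFamily (fun n : ULift.{u} ℕ => φ (k n.down)) := by
  obtain ⟨⟨i₀⟩, hdir, hdefl, hinter⟩ := hφ
  choose m hm₁ hm₂ using hdir
  -- Inserting `i₀` makes the index set nonempty, so that it can be enumerated.
  obtain ⟨j, hj⟩ := (hJ.insert i₀).exists_eq_range (Set.insert_nonempty _ _)
  let k : ℕ → I := fun n => Nat.rec (j 0) (fun n i => m i (j (n + 1))) n
  have hkj : ∀ n x, (φ (k n) x).1 ⊆ (φ (j n) x).1 := by
    rintro (_ | n) x
    · exact Set.Subset.refl _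
    · exact hm₂ (k n) (j (n + 1)) x
  have hanti : ∀ x, Antitone fun n => (φ (k n) x).1 := fun x =>
    antitone_nat_of_succ_le fun n => hm₁ (k n) (j (n + 1)) x
  refine ⟨k, ⟨⟨0⟩⟩, fun a b => ⟨⟨max a.down b.down⟩, fun x => hanti x (le_max_left _ _),
    fun x => hanti x (le_max_right _ _)⟩, fun _ => hdefl _, fun x => ?_⟩
  refine Set.Subset.antisymm (fun y hy => hJinter x y fun i hi => ?_) fun y hy => ?_
  · obtain ⟨n, rfl⟩ : i ∈ Set.range j := hj ▸ Set.mem_insert_of_mem _ hi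
    exact hkj n x (Set.mem_iInter.1 hy ⟨n⟩)
  · rw [← hinter x] at hy
    exact Set.mem_iInter.2 fun n => Set.mem_iInter.1 hy _

theorem IsGeneratingFamily.exists_sequence_of_basis {α : Type u} [Preorder α] (hα : IsDcpo α)
    {I : Type v} {φ : I → α → FinCompacts α} (hφ : IsGeneratingFamily φ) {B : Set (Set α)}
    (hBc : B.Countable) (hB : @TopologicalSpace.IsTopologicalBasis α (scottTop α) B) :
    ∃ k : ℕ → I, IsGeneratingFamily (fun n : ULift.{u} ℕ => φ (k n.down)) := by
  let _ := scottTop α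
  have hI : Nonempty I := hφ.1
  have hch : ∀ p : Set α × Set α, ∃ i, (∃ i', ∀ y ∈ p.1, (φ i' y).1 ⊆ p.2) →
      ∀ y ∈ p.1, (φ i y).1 ⊆ p.2 := by
    intro p
    by_cases h : ∃ i', ∀ y ∈ p.1, (φ i' y).1 ⊆ p.2
    · exact h.imp fun i hi _ => hi
    · exact ⟨Classical.arbitrary I, fun h' => absurd h' h⟩
  choose f hf using hch
  refine hφ.exists_sequence ((hBc.prod hBc).image f) fun x y hxy => ?_
  by_contra hle
  obtain ⟨V, hVB, hxV, hVy⟩ := hB.exists_subset_of_mem_open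
    (show x ∈ {b : α | ¬ b ≤ y} from hle) (scottOpen_not_le y)
  obtain ⟨i, hi⟩ := hφ.exists_subset hα (hB.isOpen hVB) hxV
  obtain ⟨U, hUB, hxU, hUi⟩ := hB.exists_subset_of_mem_open
    (show x ∈ {z : α | (φ i z).1 ⊆ V} from hi) ((hφ.2.2.1 i).scottOpen_subset V)
  exact hVy (hf (U, V) ⟨i, hUi⟩ x hxU (hxy _ ⟨(U, V), ⟨hUB, hVB⟩, rfl⟩)) le_rfl

/-- A QRB-domain is an ωQRB-domain iff its Scott topology is countably-based. -/
theorem omegaQRB_iff_countablyBased {X : Type u} [PartialOrder X]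
    (hX : IsQRBDomain X) :
    IsOmegaQRBDomain X ↔
      ∃ B : Set (Set X), B.Countable ∧
        @TopologicalSpace.IsTopologicalBasis X (scottTop X) B := by
  constructor
  · rintro ⟨hdcpo, -, I, hI, φ, hφ⟩
    exact hφ.exists_countable_basis hdcpo
  · rintro ⟨B, hBc, hB⟩
    obtain ⟨hdcpo, hbot, I, φ, hφ⟩ := hX
    obtain ⟨k, hk⟩ := hφ.exists_sequence_of_basis hdcpo hBc hB
    exact ⟨hdcpo, hbot, ULift ℕ, inferInstance, _, hk⟩
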